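/- arXiv:1903.10646 — 2 statements merged into one kernel-verified Lean document; each statement's English description precedes it below -/
import Mathlib

section
/- (Increasing averaging for PDA.) Fix q ≥ 0 and set w_t = t^q for t ≥ 1. Let τ, σ > 0 be such that for all x, x' ∈ dom g and y, y' ∈ dom h* one has (1/τ − L_f)·D_𝕏(x, x') + (1/σ)·D_𝕐(y, y') − ⟨K(x − x'), y − y'⟩ ≥ 0. Let (x⁰, y⁰) ∈ dom g × dom h* and for each t ≥ 0 let (x^{t+1}, y^{t+1}) = PD_{τ,σ}(x^t, y^t, 2x^{t+1} − x^t, y^t). Define A(x, y, x', y') = (1/τ)D_𝕏(x, x') + (1/σ)D_𝕐(y, y') − ⟨K(x − x'), y − y'⟩, and suppose Ω ∈ ℝ satisfies A(x, y, x', y') ≤ Ω for all x, x' ∈ dom g and y, y' ∈ dom h*. Set S_T = Σ_{t=1}^T w_t, x̄^T = (1/S_T) Σ_{t=1}^T w_t x^t and ȳ^T = (1/S_T) Σ_{t=1}^T w_t y^t. Then for every integer T ≥ 1 and every (x, y) ∈ dom g × dom h*: L(x̄^T, y) − L(x, ȳ^T) ≤ (q + 1)Ω / T. -/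
lemma aux_slope (F : ℝ → ℝ) (d : ℝ) (h0 : F 0 = 0) (hd : HasDerivAt F d 0)
    (hF : ∀ s, 0 < s → s ≤ 1 → 0 ≤ F s) : 0 ≤ d := by
  have h1 := hd.tendsto_slope_zero_right
  refine ge_of_tendsto h1 ?_
  filter_upwards [Ioc_mem_nhdsGT (show (0:ℝ) < 1 by norm_num)] with s hs
  have := hF s hs.1 hs.2
  have h2 := inv_pos.2 hs.1
  simp only [zero_add, h0, sub_zero, smul_eq_mul]
  positivity

lemma aux_line {E : Type*} [NormedAddCommGroup E] [NormedSpace ℝ E] (ψ : E → ℝ)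
    (ψ' : E → E →L[ℝ] ℝ) (h : ∀ x, HasFDerivAt ψ (ψ' x) x) (p v : E) (s : ℝ) :
    HasDerivAt (fun s : ℝ => ψ (p + s • v)) (ψ' (p + s • v) v) s := by
  have h1 : HasDerivAt (fun s : ℝ => p + s • v) v s := by
    simpa using ((hasDerivAt_id s).smul_const v).const_add p
  exact (h (p + s • v)).comp_hasDerivAt s h1

lemma aux_sc {E : Type*} [NormedAddCommGroup E] [NormedSpace ℝ E] (ψ : E → ℝ)
    (ψ' : E → E →L[ℝ] ℝ) (h : ∀ x, HasFDerivAt ψ (ψ' x) x) (c : ℝ) (v p : E)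
    (hsc : ∀ l : ℝ, 0 ≤ l → l ≤ 1 →
      ψ (l • v + (1 - l) • p) ≤ l * ψ v + (1 - l) * ψ p - 1 / 2 * l * (1 - l) * c) :
    1 / 2 * c ≤ ψ v - ψ p - ψ' p (v - p) := by
  have h1 := aux_line ψ ψ' h p (v - p) 0
  simp only [zero_smul, add_zero] at h1
  have h2 : HasDerivAt (fun s : ℝ => s * (ψ v - ψ p) - 1 / 2 * (s * (1 - s)) * c)
      ((ψ v - ψ p) - 1 / 2 * c) 0 := by
    have ha := (hasDerivAt_id (0:ℝ)).mul_const (ψ v - ψ p)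
    have hb := (((hasDerivAt_id (0:ℝ)).mul ((hasDerivAt_id (0:ℝ)).const_sub 1)).const_mul
      (1/2:ℝ)).mul_const c
    have := ha.sub hb
    exact this.congr_deriv (by simp)
  have h3 := (h2.sub h1).add_const (ψ p)
  have := aux_slope _ _ (by simp) h3 (by
    intro s hs hs1
    have := hsc s hs.le hs1
    have e : s • v + (1 - s) • p = p + s • (v - p) := by module
    rw [e] at this
    simp only [Pi.sub_apply]
    nlinarith)
  linarith

lemma aux_descent {E : Type*} [NormedAddCommGroup E] [NormedSpace ℝ E] (f : E → ℝ)
    (f' : E → E →L[ℝ] ℝ) (h : ∀ x, HasFDerivAt f (f' x) x) (Lf : ℝ)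
    (hfLip : ∀ x x' : E, ‖f' x - f' x'‖ ≤ Lf * ‖x - x'‖) (p v : E) :
    f v ≤ f p + f' p (v - p) + Lf * (1 / 2 * ‖v - p‖ ^ 2) := by
  have hder : ∀ s : ℝ, HasDerivAt (fun s : ℝ => f (p + s • (v - p)) - s * f' p (v - p)
      - s ^ 2 * (Lf * (1 / 2 * ‖v - p‖ ^ 2)))
      (f' (p + s • (v - p)) (v - p) - f' p (v - p) - (2 * s) * (Lf * (1 / 2 * ‖v - p‖ ^ 2))) s := by
    intro s
    have h1 := aux_line f f' h p (v - p) s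
    have h2 := (hasDerivAt_id s).mul_const (f' p (v - p))
    have h3 := (hasDerivAt_pow 2 s).mul_const (Lf * (1 / 2 * ‖v - p‖ ^ 2))
    have := (h1.sub h2).sub h3
    exact this.congr_deriv (by simp)
  have hanti := antitoneOn_of_deriv_nonpos (convex_Icc (0:ℝ) 1)
    (fun s _ => (hder s).continuousAt.continuousWithinAt)
    (fun s _ => (hder s).differentiableAt.differentiableWithinAt)
    (by
      intro s hs
      rw [interior_Icc] at hs
      rw [(hder s).deriv]
      have h1 : (f' (p + s • (v - p)) - f' p) (v - p) ≤ (Lf * (s * ‖v - p‖)) * ‖v - p‖ := by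
        refine (le_abs_self _).trans ?_
        refine ((f' (p + s • (v - p)) - f' p).le_opNorm (v - p)).trans ?_
        refine mul_le_mul_of_nonneg_right ?_ (norm_nonneg _)
        refine (hfLip _ _).trans (le_of_eq ?_)
        rw [add_sub_cancel_left, norm_smul, Real.norm_of_nonneg hs.1.le]
      rw [ContinuousLinearMap.sub_apply] at h1
      nlinarith)
  have := hanti (show (0:ℝ) ∈ Set.Icc (0:ℝ) 1 by simp) (show (1:ℝ) ∈ Set.Icc (0:ℝ) 1 by simp)
    zero_le_one
  simp at this
  rw [map_sub]
  linarith

lemma aux_three {E : Type*} [NormedAddCommGroup E] [NormedSpace ℝ E] (ψ : E → ℝ)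
    (ψ' : E → E →L[ℝ] ℝ) (h : ∀ x, HasFDerivAt ψ (ψ' x) x)
    (D : E → E → ℝ) (hD : ∀ x' x, D x' x = ψ x' - ψ x - ψ' x (x' - x))
    (C : Set E) (φ : E → ℝ) (hφ : ConvexOn ℝ C φ) (c : ℝ) (z p u : E) (hz : z ∈ C)
    (hu : u ∈ C) (hmin : ∀ u ∈ C, φ z + c * D z p ≤ φ u + c * D u p) :
    φ z + c * D z p + c * D u z ≤ φ u + c * D u p := by
  have h1 := (aux_line ψ ψ' h z (u - z) 0)
  simp only [zero_smul, add_zero] at h1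
  have h2 := ((h1.sub_const (ψ z)).sub ((hasDerivAt_id (0:ℝ)).mul_const (ψ' p (u - z)))).const_mul c
  have h3 := ((hasDerivAt_id (0:ℝ)).mul_const (φ u - φ z)).add h2
  have := aux_slope _ _ (by simp) h3 (by
    intro s hs hs1
    have hm : z + s • (u - z) = (1 - s) • z + s • u := by module
    have hin : z + s • (u - z) ∈ C := by
      rw [hm]; exact hφ.1 hz hu (by linarith) hs.le (by ring)
    have hle : φ (z + s • (u - z)) ≤ (1 - s) * φ z + s * φ u := by
      rw [hm]; exact hφ.2 hz hu (by linarith) hs.le (by ring)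
    have := hmin _ hin
    rw [hD, hD] at this
    have e : ψ' p (z + s • (u - z) - p) = ψ' p (z - p) + s * ψ' p (u - z) := by
      rw [← smul_eq_mul, ← map_smul, ← map_add]; congr 1; module
    rw [e] at this
    simp only [Pi.sub_apply, Pi.add_apply, id]
    linarith)
  rw [hD, hD, hD]
  have e : ψ' p (u - p) = ψ' p (z - p) + ψ' p (u - z) := by
    rw [← map_add]; congr 1; module
  rw [e]
  linarith

lemma aux_pow (q : ℝ) (hq : 0 ≤ q) (T : ℕ) :
    (T : ℝ) ^ q * T ≤ (q + 1) * ∑ t ∈ Finset.Icc 1 T, (t : ℝ) ^ q := by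
  induction T with
  | zero => simp
  | succ n ih =>
    rw [Finset.sum_Icc_succ_top (by omega), mul_add]
    have hpos : (0:ℝ) < ((n + 1 : ℕ) : ℝ) := by positivity
    have hb := one_add_mul_self_le_rpow_one_add (s := -(1 / ((n + 1 : ℕ) : ℝ))) (p := q + 1)
      (by
        have : 1 / ((n + 1 : ℕ) : ℝ) ≤ 1 := by
          rw [div_le_one hpos]; push_cast; linarith [Nat.cast_nonneg (α := ℝ) n]
        linarith) (by linarith)
    have e : 1 + -(1 / ((n + 1 : ℕ) : ℝ)) = (n : ℝ) / ((n + 1 : ℕ) : ℝ) := by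
      field_simp; push_cast; ring
    rw [e, Real.div_rpow (by positivity) hpos.le, le_div_iff₀ (by positivity),
      Real.rpow_add_one hpos.ne', Real.rpow_add_one' (by positivity) (by linarith)] at hb
    have e2 : (1 + (q + 1) * -(1 / ((n + 1 : ℕ) : ℝ))) *
        (((n + 1 : ℕ) : ℝ) ^ q * ((n + 1 : ℕ) : ℝ)) =
        ((n + 1 : ℕ) : ℝ) ^ q * ((n + 1 : ℕ) : ℝ) - (q + 1) * ((n + 1 : ℕ) : ℝ) ^ q := by
      field_simp
      ring
    rw [e2] at hb
    linarith

/-- Increasing iterate averaging for the nonlinear primal-dual algorithm (PDA):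
with weights `w_t = t^q`, the weighted averages of the PDA iterates satisfy a
`(q+1)Ω/T` bound on the pointwise saddle-point gap. -/
theorem stmt_1
    {X Y : Type*} [NormedAddCommGroup X] [NormedSpace ℝ X] [FiniteDimensional ℝ X]
    [NormedAddCommGroup Y] [NormedSpace ℝ Y] [FiniteDimensional ℝ Y]
    (K : X →L[ℝ] Y →L[ℝ] ℝ)
    (Lf : ℝ) (hLf : 0 ≤ Lf)
    (f : X → ℝ) (f' : X → X →L[ℝ] ℝ)
    (hfconv : ConvexOn ℝ Set.univ f)
    (hfderiv : ∀ x, HasFDerivAt f (f' x) x)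
    (hfLip : ∀ x x' : X, ‖f' x - f' x'‖ ≤ Lf * ‖x - x'‖)
    (domg : Set X) (hdomgne : domg.Nonempty) (hdomgconv : Convex ℝ domg)
    (g : X → ℝ) (hgconv : ConvexOn ℝ domg g) (hglsc : LowerSemicontinuousOn g domg)
    (domh : Set Y) (hdomhne : domh.Nonempty) (hdomhconv : Convex ℝ domh)
    (hstar : Y → ℝ) (hhconv : ConvexOn ℝ domh hstar)
    (hhlsc : LowerSemicontinuousOn hstar domh)
    (ψX : X → ℝ) (ψX' : X → X →L[ℝ] ℝ) (hψXd : ∀ x, HasFDerivAt ψX (ψX' x) x)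
    (hψXsc : ∀ (v v' : X) (l : ℝ), 0 ≤ l → l ≤ 1 →
      ψX (l • v + (1 - l) • v') ≤
        l * ψX v + (1 - l) * ψX v' - 1 / 2 * l * (1 - l) * ‖v - v'‖ ^ 2)
    (ψY : Y → ℝ) (ψY' : Y → Y →L[ℝ] ℝ) (hψYd : ∀ y, HasFDerivAt ψY (ψY' y) y)
    (hψYsc : ∀ (v v' : Y) (l : ℝ), 0 ≤ l → l ≤ 1 →
      ψY (l • v + (1 - l) • v') ≤
        l * ψY v + (1 - l) * ψY v' - 1 / 2 * l * (1 - l) * ‖v - v'‖ ^ 2)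
    (DX : X → X → ℝ) (hDX : ∀ x' x, DX x' x = ψX x' - ψX x - ψX' x (x' - x))
    (DY : Y → Y → ℝ) (hDY : ∀ y' y, DY y' y = ψY y' - ψY y - ψY' y (y' - y))
    (L : X → Y → ℝ) (hLdef : ∀ x y, L x y = K x y + f x + g x - hstar y)
    -- weight exponent
    (q : ℝ) (hq : 0 ≤ q)
    -- stepsizes satisfying the stepsize condition
    (τ σ : ℝ) (hτ : 0 < τ) (hσ : 0 < σ)
    (hstep : ∀ x ∈ domg, ∀ x' ∈ domg, ∀ y ∈ domh, ∀ y' ∈ domh,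
      0 ≤ (1 / τ - Lf) * DX x x' + 1 / σ * DY y y' - K (x - x') (y - y'))
    -- the PDA iterates: (x^{t+1}, y^{t+1}) = PD_{τ,σ}(x^t, y^t, 2x^{t+1} - x^t, y^t)
    (xs : ℕ → X) (ys : ℕ → Y)
    (hinit : xs 0 ∈ domg ∧ ys 0 ∈ domh)
    (hxs : ∀ t : ℕ, xs (t + 1) ∈ domg ∧ ∀ u ∈ domg,
      f (xs t) + f' (xs t) (xs (t + 1) - xs t) + g (xs (t + 1)) + K (xs (t + 1)) (ys t) +
          1 / τ * DX (xs (t + 1)) (xs t) ≤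
        f (xs t) + f' (xs t) (u - xs t) + g u + K u (ys t) + 1 / τ * DX u (xs t))
    (hys : ∀ t : ℕ, ys (t + 1) ∈ domh ∧ ∀ v ∈ domh,
      hstar (ys (t + 1)) - K (2 • xs (t + 1) - xs t) (ys (t + 1)) +
          1 / σ * DY (ys (t + 1)) (ys t) ≤
        hstar v - K (2 • xs (t + 1) - xs t) v + 1 / σ * DY v (ys t))
    -- upper bound Ω on A(x, y, x', y') over the domains
    (Ω : ℝ)
    (hΩ : ∀ x ∈ domg, ∀ x' ∈ domg, ∀ y ∈ domh, ∀ y' ∈ domh,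
      1 / τ * DX x x' + 1 / σ * DY y y' - K (x - x') (y - y') ≤ Ω) :
    ∀ T : ℕ, 1 ≤ T → ∀ x ∈ domg, ∀ y ∈ domh,
      L ((1 / ∑ t ∈ Finset.Icc 1 T, (t : ℝ) ^ q) •
            ∑ t ∈ Finset.Icc 1 T, ((t : ℝ) ^ q) • xs t) y -
          L x ((1 / ∑ t ∈ Finset.Icc 1 T, (t : ℝ) ^ q) •
            ∑ t ∈ Finset.Icc 1 T, ((t : ℝ) ^ q) • ys t) ≤
        (q + 1) * Ω / (T : ℝ) := by
  intro T hT x hx y hy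
  have hxm : ∀ t, xs t ∈ domg := by
    intro t
    cases t with
    | zero => exact hinit.1
    | succ n => exact (hxs n).1
  have hym : ∀ t, ys t ∈ domh := by
    intro t
    cases t with
    | zero => exact hinit.2
    | succ n => exact (hys n).1
  have hDXge : ∀ u v, 1 / 2 * ‖u - v‖ ^ 2 ≤ DX u v := by
    intro u v
    rw [hDX]
    exact aux_sc ψX ψX' hψXd _ u v (hψXsc u v)
  have hfgrad : ∀ u v, f v + f' v (u - v) ≤ f u := by
    intro u v
    have := aux_sc f f' hfderiv 0 u v (by
      intro l h0 h1
      have := hfconv.2 (Set.mem_univ u) (Set.mem_univ v) h0 (sub_nonneg.2 h1) (by ring)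
      simp only [smul_eq_mul] at this
      linarith)
    linarith
  have hApos : ∀ x ∈ domg, ∀ x' ∈ domg, ∀ y ∈ domh, ∀ y' ∈ domh,
      0 ≤ 1 / τ * DX x x' + 1 / σ * DY y y' - K (x - x') (y - y') := by
    intro x hx x' hx' y hy y' hy'
    have h1 := hstep x hx x' hx' y hy y' hy'
    have h2 : 0 ≤ Lf * DX x x' :=
      mul_nonneg hLf (le_trans (by positivity) (hDXge x x'))
    linarith
  have hΩ0 : 0 ≤ Ω := (hApos x hx x hx y hy y hy).trans (hΩ x hx x hx y hy y hy)
  have hlin : ∀ (w : Y), ConvexOn ℝ domg (fun u => K u w) := fun w =>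
    ((K.flip w).toLinearMap.convexOn hdomgconv)
  have hlinY : ∀ (w : X), ConvexOn ℝ domh (fun v => K w v) := fun w =>
    ((K w).toLinearMap.convexOn hdomhconv)
  obtain ⟨A, hA⟩ : ∃ A : ℕ → ℝ, ∀ t, A t =
      1 / τ * DX x (xs t) + 1 / σ * DY y (ys t) - K (x - xs t) (y - ys t) := ⟨_, fun _ => rfl⟩
  have hA0 : ∀ t, 0 ≤ A t := fun t => by
    rw [hA]; exact hApos x hx _ (hxm t) y hy _ (hym t)
  have hAΩ : ∀ t, A t ≤ Ω := fun t => by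
    rw [hA]; exact hΩ x hx _ (hxm t) y hy _ (hym t)
  have hone : ∀ t, L (xs (t + 1)) y - L x (ys (t + 1)) ≤ A t - A (t + 1) := by
    intro t
    have h1 := aux_three ψX ψX' hψXd DX hDX domg
      (fun u => (f' (xs t) u + g u) + K u (ys t))
      ((((f' (xs t)).toLinearMap.convexOn hdomgconv).add hgconv).add (hlin (ys t)))
      (1 / τ) (xs (t + 1)) (xs t) x (hxm _) hx (by
        intro u hu
        have := (hxs t).2 u hu
        simp only [map_sub] at this ⊢
        linarith)
    have h2 := aux_three ψY ψY' hψYd DY hDY domh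
      (fun v => hstar v + K (-(2 • xs (t + 1) - xs t)) v)
      (hhconv.add (hlinY _))
      (1 / σ) (ys (t + 1)) (ys t) y (hym _) hy (by
        intro v hv
        have := (hys t).2 v hv
        simp only [map_neg, ContinuousLinearMap.neg_apply] at this ⊢
        linarith)
    have h3 := aux_descent f f' hfderiv Lf hfLip (xs t) (xs (t + 1))
    have h4 := mul_le_mul_of_nonneg_left (hDXge (xs (t + 1)) (xs t)) hLf
    have h5 := hfgrad x (xs t)
    have h6 := hstep _ (hxm (t + 1)) _ (hxm t) _ (hym (t + 1)) _ (hym t)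
    rw [hA, hA, hLdef, hLdef]
    simp only [map_sub, map_neg, two_smul, map_add, ContinuousLinearMap.neg_apply,
      ContinuousLinearMap.sub_apply, ContinuousLinearMap.add_apply] at h1 h2 h3 h5 h6 ⊢
    linarith
  have hw0 : ∀ t : ℕ, 0 ≤ (t : ℝ) ^ q := fun t => by positivity
  have hsum : ∀ N : ℕ, ∑ t ∈ Finset.Icc 1 N, (t : ℝ) ^ q * (L (xs t) y - L x (ys t)) ≤
      (N : ℝ) ^ q * (Ω - A N) := by
    intro N
    induction N with
    | zero =>
      simpa using mul_nonneg (hw0 0) (sub_nonneg.2 (hAΩ 0))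
    | succ n ih =>
      rw [Finset.sum_Icc_succ_top (by omega)]
      have h1 := mul_le_mul_of_nonneg_left (hone n) (hw0 (n + 1))
      have h2 : (n : ℝ) ^ q ≤ ((n + 1 : ℕ) : ℝ) ^ q :=
        Real.rpow_le_rpow (by positivity) (by push_cast; linarith) hq
      have h3 := mul_le_mul_of_nonneg_right h2 (sub_nonneg.2 (hAΩ n))
      linarith
  have hS := aux_pow q hq T
  have hTpos : (0 : ℝ) < T := by exact_mod_cast hT
  have hwT : (0 : ℝ) < (T : ℝ) ^ q := by positivity
  have hsT := hsum T
  obtain ⟨S, hSdef⟩ : ∃ S, S = ∑ t ∈ Finset.Icc 1 T, (t : ℝ) ^ q := ⟨_, rfl⟩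
  rw [← hSdef] at hS ⊢
  have hSpos : 0 < S := by
    by_contra hneg
    have : (q + 1) * S ≤ 0 := mul_nonpos_of_nonneg_of_nonpos (by linarith) (not_lt.1 hneg)
    have := mul_pos hwT hTpos
    linarith
  have hw1 : ∑ t ∈ Finset.Icc 1 T, (1 / S * (t : ℝ) ^ q) = 1 := by
    rw [← Finset.mul_sum, ← hSdef]; field_simp
  have hwn : ∀ t ∈ Finset.Icc 1 T, 0 ≤ 1 / S * (t : ℝ) ^ q := fun t _ => by positivity
  have hJx := (((hlin y).add (hfconv.subset (Set.subset_univ _) hdomgconv)).add hgconv).map_sum_le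
    hwn hw1 (fun t _ => hxm t)
  have hJy := (hhconv.add (hlinY (-x))).map_sum_le hwn hw1 (fun t _ => hym t)
  have hJ : L ((1 / S) • ∑ t ∈ Finset.Icc 1 T, ((t : ℝ) ^ q) • xs t) y -
      L x ((1 / S) • ∑ t ∈ Finset.Icc 1 T, ((t : ℝ) ^ q) • ys t) ≤
      1 / S * ∑ t ∈ Finset.Icc 1 T, (t : ℝ) ^ q * (L (xs t) y - L x (ys t)) := by
    rw [Finset.smul_sum, Finset.smul_sum, Finset.mul_sum]
    simp only [smul_smul]
    have e : ∀ t ∈ Finset.Icc 1 T, 1 / S * ((t : ℝ) ^ q * (L (xs t) y - L x (ys t))) =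
        (1 / S * (t : ℝ) ^ q) * (K (xs t) y + f (xs t) + g (xs t)) +
        (1 / S * (t : ℝ) ^ q) * (hstar (ys t) + K (-x) (ys t)) -
        (1 / S * (t : ℝ) ^ q) * (hstar y + f x + g x) := by
      intro t _
      rw [hLdef, hLdef, map_neg, ContinuousLinearMap.neg_apply]
      ring
    rw [Finset.sum_congr rfl e, Finset.sum_sub_distrib, Finset.sum_add_distrib,
      ← Finset.sum_mul _ _ (hstar y + f x + g x), hw1, hLdef, hLdef]
    simp only [Pi.add_apply, smul_eq_mul] at hJx hJy
    rw [map_neg, ContinuousLinearMap.neg_apply] at hJy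
    simp only [map_neg, ContinuousLinearMap.neg_apply] at hJx hJy ⊢
    linarith
  refine hJ.trans ?_
  have h1 : ∑ t ∈ Finset.Icc 1 T, (t : ℝ) ^ q * (L (xs t) y - L x (ys t)) ≤ (T : ℝ) ^ q * Ω :=
    hsT.trans (mul_le_mul_of_nonneg_left (by linarith [hA0 T]) hwT.le)
  rw [one_div, inv_mul_le_iff₀ hSpos, ← mul_div_assoc, le_div_iff₀ hTpos]
  have h2 := mul_le_mul_of_nonneg_right h1 hTpos.le
  have h3 := mul_le_mul_of_nonneg_right hS hΩ0
  linarith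
end

section
/- (Abstract O(1/T) rate from a critical inequality under polynomial averaging.) Let 𝕏 and 𝕐 be real vector spaces, C ⊆ 𝕏 and D ⊆ 𝕐 convex sets, and L : 𝕏 × 𝕐 → ℝ such that x ↦ L(x, y) is convex on C for each y ∈ D and y ↦ L(x, y) is concave on D for each x ∈ C. Let Ω ≥ 0, q ≥ 0, and w_t = t^q for t ≥ 1. Let (x^t, y^t)_{t ≥ 0} be a sequence in C × D such that for every (x, y) ∈ C × D there exists a sequence (A_t)_{t ≥ 0} of reals with 0 ≤ A_t ≤ Ω for all t and L(x^{t+1}, y) − L(x, y^{t+1}) ≤ A_t − A_{t+1} for all t ≥ 0. Then with S_T = Σ_{t=1}^T w_t, x̄^T = (1/S_T) Σ_{t=1}^T w_t x^t and ȳ^T = (1/S_T) Σ_{t=1}^T w_t y^t, for every integer T ≥ 1 and every (x, y) ∈ C × D: L(x̄^T, y) − L(x, ȳ^T) ≤ (q + 1)Ω/T. -/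
theorem aux_sum (q : ℝ) (hq : 0 ≤ q) (T : ℕ) :
    (T : ℝ) ^ (q + 1) ≤ (q + 1) * ∑ t ∈ Finset.Icc 1 T, (t : ℝ) ^ q := by
  induction T with
  | zero => simp [Real.zero_rpow (by linarith : q + 1 ≠ 0)]
  | succ n ih =>
    rw [Finset.sum_Icc_succ_top (by omega)]
    have hn : (0 : ℝ) < (n : ℝ) + 1 := by positivity
    have hb := one_add_mul_self_le_rpow_one_add (s := -1 / ((n : ℝ) + 1)) (p := q + 1)
      (by rw [le_div_iff₀ hn]; have : (0 : ℝ) ≤ n := by positivity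
          linarith) (by linarith)
    have e : 1 + -1 / ((n : ℝ) + 1) = n / ((n : ℝ) + 1) := by field_simp; ring
    rw [e, Real.div_rpow (by positivity) hn.le, le_div_iff₀ (by positivity)] at hb
    have e2 : ((n : ℝ) + 1) ^ (q + 1) = ((n : ℝ) + 1) ^ q * (n + 1) := by
      rw [Real.rpow_add hn, Real.rpow_one]
    have e3 : (1 + (q + 1) * (-1 / ((n : ℝ) + 1))) * ((n : ℝ) + 1) ^ (q + 1)
        = ((n : ℝ) + 1) ^ (q + 1) - (q + 1) * ((n : ℝ) + 1) ^ q := by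
      rw [e2]; field_simp; ring
    rw [e3] at hb
    push_cast
    linarith

theorem aux_abel (q : ℝ) (hq : 0 ≤ q) (Ω : ℝ) (A g : ℕ → ℝ)
    (hA : ∀ t : ℕ, 0 ≤ A t ∧ A t ≤ Ω) (hg : ∀ t, g (t + 1) ≤ A t - A (t + 1)) (T : ℕ) :
    ∑ t ∈ Finset.Icc 1 T, (t : ℝ) ^ q * g t ≤ (T : ℝ) ^ q * (Ω - A T) := by
  induction T with
  | zero =>
    simpa using mul_nonneg (Real.rpow_nonneg le_rfl q) (sub_nonneg.2 (hA 0).2)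
  | succ n ih =>
    rw [Finset.sum_Icc_succ_top (by omega)]
    have h1 : (n : ℝ) ^ q ≤ ((n + 1 : ℕ) : ℝ) ^ q :=
      Real.rpow_le_rpow (by positivity) (by push_cast; linarith) hq
    have h2 : (0 : ℝ) ≤ ((n + 1 : ℕ) : ℝ) ^ q := by positivity
    have h3 := mul_le_mul_of_nonneg_left (hg n) h2
    have h4 := mul_le_mul_of_nonneg_right h1 (sub_nonneg.2 (hA n).2)
    linarith

theorem stmt_14 {X Y : Type*} [AddCommGroup X] [Module ℝ X] [AddCommGroup Y] [Module ℝ Y]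
    (C : Set X) (D : Set Y) (hC : Convex ℝ C) (hD : Convex ℝ D)
    (L : X → Y → ℝ)
    (hconv : ∀ y ∈ D, ConvexOn ℝ C (fun x => L x y))
    (hconc : ∀ x ∈ C, ConcaveOn ℝ D (fun y => L x y))
    (Ω : ℝ) (hΩ : 0 ≤ Ω) (q : ℝ) (hq : 0 ≤ q)
    (xs : ℕ → X) (ys : ℕ → Y)
    (hmem : ∀ t : ℕ, xs t ∈ C ∧ ys t ∈ D)
    (hcrit : ∀ x ∈ C, ∀ y ∈ D, ∃ A : ℕ → ℝ,
      (∀ t : ℕ, 0 ≤ A t ∧ A t ≤ Ω) ∧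
      (∀ t : ℕ, L (xs (t + 1)) y - L x (ys (t + 1)) ≤ A t - A (t + 1))) :
    ∀ T : ℕ, 1 ≤ T → ∀ x ∈ C, ∀ y ∈ D,
      L ((1 / ∑ t ∈ Finset.Icc 1 T, (t : ℝ) ^ q) •
            ∑ t ∈ Finset.Icc 1 T, ((t : ℝ) ^ q) • xs t) y -
          L x ((1 / ∑ t ∈ Finset.Icc 1 T, (t : ℝ) ^ q) •
            ∑ t ∈ Finset.Icc 1 T, ((t : ℝ) ^ q) • ys t) ≤
        (q + 1) * Ω / (T : ℝ) := by
  intro T hT x hx y hy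
  obtain ⟨A, hA, hAg⟩ := hcrit x hx y hy
  have hTp : (0 : ℝ) < T := by exact_mod_cast hT
  have hw : ∀ t ∈ Finset.Icc 1 T, (0 : ℝ) ≤ (t : ℝ) ^ q := fun t _ => by positivity
  have hs := aux_sum q hq T
  have hab := aux_abel q hq Ω A (fun t => L (xs t) y - L x (ys t)) hA hAg T
  have hSp : 0 < ∑ t ∈ Finset.Icc 1 T, (t : ℝ) ^ q := by
    have : 0 < (T : ℝ) ^ (q + 1) := by positivity
    exact pos_of_mul_pos_right (this.trans_le hs) (by linarith)
  have h1 := (hconv y hy).map_centerMass_le hw hSp (fun t _ => (hmem t).1)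
  have h2 := (hconc x hx).le_map_centerMass hw hSp (fun t _ => (hmem t).2)
  simp only [Finset.centerMass, smul_eq_mul, Function.comp] at h1 h2
  rw [one_div]
  refine (sub_le_sub h1 h2).trans ?_
  rw [← mul_sub, ← Finset.sum_sub_distrib]
  simp only [← mul_sub]
  rw [inv_mul_le_iff₀ hSp]
  have h3 : (T : ℝ) ^ q * (Ω - A T) ≤ (T : ℝ) ^ q * Ω :=
    mul_le_mul_of_nonneg_left (by linarith [(hA T).1]) (by positivity)
  refine (hab.trans h3).trans ?_
  rw [← mul_div_assoc, le_div_iff₀ hTp]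
  rw [Real.rpow_add hTp, Real.rpow_one] at hs
  have := mul_le_mul_of_nonneg_right hs hΩ
  linarith
end
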